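/- On a Hilbert space, an invertible power bounded operator whose inverse is also power bounded is similar to a unitary operator. -/

import Mathlib

open ContinuousLinearMap Filter
open scoped InnerProductSpace Topology

lemma aux_avg_operator {X : Type*} [NormedAddCommGroup X] [InnerProductSpace ℂ X] [CompleteSpace X]
    (f : ℕ → X → X → ℂ) (M : ℝ)
    (hb : ∀ n x y, ‖f n x y‖ ≤ M * ‖x‖ * ‖y‖)
    (h1 : ∀ n x x' y, f n (x + x') y = f n x y + f n x' y)
    (h2 : ∀ n (c : ℂ) x y, f n (c • x) y = (starRingEnd ℂ) c * f n x y)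
    (h3 : ∀ n x y y', f n x (y + y') = f n x y + f n x y')
    (h4 : ∀ n (c : ℂ) x y, f n x (c • y) = c * f n x y) :
    ∃ A : X →L[ℂ] X, ∀ x y, Tendsto (fun n => f n x y) (hyperfilter ℕ) (𝓝 ⟪A x, y⟫_ℂ) := by
  have hex : ∀ x y, ∃ z, Tendsto (fun n => f n x y) (hyperfilter ℕ) (𝓝 z) := by
    intro x y
    have hc := isCompact_closedBall (0 : ℂ) (M * ‖x‖ * ‖y‖)
    obtain ⟨z, -, hz⟩ := hc.ultrafilter_le_nhds' ((hyperfilter ℕ).map (fun n => f n x y))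
      (by
        rw [Ultrafilter.mem_map]
        exact Filter.univ_mem' (fun n => by simpa using hb n x y))
    exact ⟨z, hz⟩
  choose B hB using hex
  let L : X →ₛₗ[starRingEnd ℂ] X →ₗ[ℂ] ℂ := LinearMap.mk₂'ₛₗ (starRingEnd ℂ) (RingHom.id ℂ) B
    (fun x x' y => tendsto_nhds_unique (hB _ _) (by simpa only [h1] using (hB x y).add (hB x' y)))
    (fun c x y => tendsto_nhds_unique (hB _ _)
      (by simpa only [h2, smul_eq_mul] using (hB x y).const_mul (starRingEnd ℂ c)))
    (fun x y y' => tendsto_nhds_unique (hB _ _) (by simpa only [h3] using (hB x y).add (hB x y')))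
    (fun c x y => tendsto_nhds_unique (hB _ _)
      (by simpa only [h4, smul_eq_mul, RingHom.id_apply] using (hB x y).const_mul c))
  have hL : ∀ x y, ‖L x y‖ ≤ M * ‖x‖ * ‖y‖ := fun x y =>
    le_of_tendsto (hB x y).norm (Eventually.of_forall fun n => hb n x y)
  refine ⟨InnerProductSpace.continuousLinearMapOfBilin (L.mkContinuous₂ M hL), fun x y => ?_⟩
  rw [InnerProductSpace.continuousLinearMapOfBilin_apply]
  exact hB x y

lemma aux_similar {X : Type*} [NormedAddCommGroup X] [InnerProductSpace ℂ X] [CompleteSpace X]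
    (T T' : X →L[ℂ] X) (hTT' : T ∘L T' = 1) (A : X →L[ℂ] X) (c : ℝ) (hc : 0 < c)
    (hpos : A.IsPositive) (hlow : ∀ x, c * ‖x‖ ^ 2 ≤ ‖⟪A x, x⟫_ℂ‖)
    (hinv : ∀ x, ⟪A (T x), T x⟫_ℂ = ⟪A x, x⟫_ℂ) :
    ∃ W W' : X →L[ℂ] X, W ∘L W' = 1 ∧ W' ∘L W = 1 ∧
      (∀ x : X, ‖(W ∘L T ∘L W') x‖ = ‖x‖) ∧
      Function.Surjective (W ∘L T ∘L W') := by
  have hA0 : 0 ≤ A := (ContinuousLinearMap.nonneg_iff_isPositive A).2 hpos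
  have hu : IsUnit A := ContinuousLinearMap.isUnit_of_forall_le_norm_inner_map A
    (c := ⟨c, hc.le⟩) hc (fun x => (mul_comm _ _).trans_le (hlow x))
  have hsu : IsUnit (CFC.sqrt A) := (CFC.isUnit_sqrt_iff A).2 hu
  obtain ⟨u, hu'⟩ := hsu
  have hW : ∀ x, ⟪CFC.sqrt A x, CFC.sqrt A x⟫_ℂ = ⟪A x, x⟫_ℂ := by
    intro x
    have hs : (CFC.sqrt A).IsPositive := (ContinuousLinearMap.nonneg_iff_isPositive _).1 (CFC.sqrt_nonneg A)
    have h1 := hs.isSymmetric (CFC.sqrt A x) x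
    have h2 : CFC.sqrt A (CFC.sqrt A x) = A x := by
      conv_rhs => rw [← CFC.sqrt_mul_sqrt_self A hA0]
      rfl
    simp only [ContinuousLinearMap.coe_coe] at h1
    rw [← h1, h2]
  have hWW' : (u : X →L[ℂ] X) ∘L (↑u⁻¹ : X →L[ℂ] X) = 1 := u.mul_inv
  have hW'W : (↑u⁻¹ : X →L[ℂ] X) ∘L (u : X →L[ℂ] X) = 1 := u.inv_mul
  rw [← hu'] at hW
  refine ⟨u, (↑u⁻¹ : X →L[ℂ] X), hWW', hW'W, fun x => ?_, fun y => ?_⟩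
  · have h : ⟪(u : X →L[ℂ] X) (T ((↑u⁻¹ : X →L[ℂ] X) x)), (u : X →L[ℂ] X) (T ((↑u⁻¹ : X →L[ℂ] X) x))⟫_ℂ = ⟪x, x⟫_ℂ := by
      rw [hW, hinv, ← hW]
      have := DFunLike.congr_fun hWW' x
      simp only [ContinuousLinearMap.comp_apply, one_apply_eq_self] at this
      rw [this]
    rw [inner_self_eq_norm_sq_to_K, inner_self_eq_norm_sq_to_K] at h
    norm_cast at h
    exact (pow_left_inj₀ (norm_nonneg _) (norm_nonneg _) two_ne_zero).1 h
  · refine ⟨(u : X →L[ℂ] X) (T' ((↑u⁻¹ : X →L[ℂ] X) y)), ?_⟩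
    have e1 := DFunLike.congr_fun hWW'
    have e2 := DFunLike.congr_fun hW'W
    have e3 := DFunLike.congr_fun hTT'
    simp only [ContinuousLinearMap.comp_apply, one_apply_eq_self] at e1 e2 e3 ⊢
    rw [e2, e3, e1]

/-- Corollary 6.1 (Sz.-Nagy): on a Hilbert space, an invertible power bounded operator with
power bounded inverse is similar to a unitary operator. -/
theorem stmt16 {X : Type*} [NormedAddCommGroup X] [InnerProductSpace ℂ X] [CompleteSpace X]
    (T T' : X →L[ℂ] X) (hTT' : T ∘L T' = 1) (hT'T : T' ∘L T = 1)
    (hT : ∃ C : ℝ, ∀ n : ℕ, ‖T ^ n‖ ≤ C) (hT' : ∃ C : ℝ, ∀ n : ℕ, ‖T' ^ n‖ ≤ C) :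
    ∃ W W' : X →L[ℂ] X, W ∘L W' = 1 ∧ W' ∘L W = 1 ∧
      (∀ x : X, ‖(W ∘L T ∘L W') x‖ = ‖x‖) ∧
      Function.Surjective (W ∘L T ∘L W') := by
  obtain ⟨C, hC⟩ := hT
  obtain ⟨D₀, hD₀⟩ := hT'
  obtain ⟨D, hDpos, hD⟩ : ∃ D : ℝ, 0 < D ∧ ∀ n : ℕ, ‖T' ^ n‖ ≤ D :=
    ⟨max D₀ 1, by positivity, fun n => (hD₀ n).trans (le_max_left _ _)⟩
  have hC0 : 0 ≤ C := (norm_nonneg _).trans (hC 0)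
  have hTn : ∀ n x, ‖(T ^ n) x‖ ≤ C * ‖x‖ := fun n x => (T ^ n).le_of_opNorm_le (hC n) x
  have hTl : ∀ n x, ‖x‖ ≤ D * ‖(T ^ n) x‖ := by
    intro n x
    have hc : Commute T' T := hT'T.trans hTT'.symm
    have h : T' ^ n * T ^ n = 1 := by
      rw [← hc.mul_pow, show T' * T = 1 from hT'T, one_pow]
    have h2 : (T' ^ n) ((T ^ n) x) = x := DFunLike.congr_fun h x
    calc ‖x‖ = ‖(T' ^ n) ((T ^ n) x)‖ := by rw [h2]
      _ ≤ _ := (T' ^ n).le_of_opNorm_le (hD n) _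
  have hn0 : ∀ n : ℕ, (0 : ℝ) < (n : ℝ) + 1 := fun n => by positivity
  let f : ℕ → X → X → ℂ := fun n x y =>
    (((n : ℝ) + 1)⁻¹ : ℝ) * ∑ k ∈ Finset.range (n + 1), ⟪(T ^ k) x, (T ^ k) y⟫_ℂ
  have hterm : ∀ k x y, ‖⟪(T ^ k) x, (T ^ k) y⟫_ℂ‖ ≤ C ^ 2 * ‖x‖ * ‖y‖ := by
    intro k x y
    calc _ ≤ ‖(T ^ k) x‖ * ‖(T ^ k) y‖ := norm_inner_le_norm _ _
      _ ≤ (C * ‖x‖) * (C * ‖y‖) := by gcongr <;> apply hTn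
      _ = _ := by ring
  obtain ⟨A, hA⟩ := aux_avg_operator f (C ^ 2)
    (by
      intro n x y
      simp only [f, norm_mul, Complex.norm_real, norm_inv, Real.norm_of_nonneg (hn0 n).le]
      rw [inv_mul_le_iff₀ (hn0 n)]
      refine (norm_sum_le_of_le _ fun k _ => hterm k x y).trans ?_
      simp)
    (by intro n x x' y; simp only [f, map_add, inner_add_left, Finset.sum_add_distrib, mul_add])
    (by intro n c x y; simp only [f, map_smul, inner_smul_left, ← Finset.mul_sum]; ring)
    (by intro n x x' y; simp only [f, map_add, inner_add_right, Finset.sum_add_distrib, mul_add])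
    (by intro n c x y; simp only [f, map_smul, inner_smul_right, ← Finset.mul_sum]; ring)
  have hfr : ∀ n x, f n x x =
      (((((n : ℝ) + 1)⁻¹ * ∑ k ∈ Finset.range (n + 1), ‖(T ^ k) x‖ ^ 2 : ℝ)) : ℂ) := by
    intro n x
    simp only [f, inner_self_eq_norm_sq_to_K]
    push_cast
    rfl
  have hlow0 : ∀ (n : ℕ) x, (D ^ 2)⁻¹ * ‖x‖ ^ 2 ≤
      ((n : ℝ) + 1)⁻¹ * ∑ k ∈ Finset.range (n + 1), ‖(T ^ k) x‖ ^ 2 := by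
    intro n x
    rw [le_inv_mul_iff₀ (hn0 n)]
    have : ∑ k ∈ Finset.range (n + 1), (D ^ 2)⁻¹ * ‖x‖ ^ 2 ≤
        ∑ k ∈ Finset.range (n + 1), ‖(T ^ k) x‖ ^ 2 := by
      refine Finset.sum_le_sum fun k _ => ?_
      rw [inv_mul_le_iff₀ (by positivity), ← mul_pow]
      exact pow_le_pow_left₀ (norm_nonneg _) (hTl k x) 2
    simpa using this
  have hlow : ∀ x, (D ^ 2)⁻¹ * ‖x‖ ^ 2 ≤ (⟪A x, x⟫_ℂ).re := by
    intro x
    refine ge_of_tendsto ((Complex.continuous_re.tendsto _).comp (hA x x))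
      (Eventually.of_forall fun n => ?_)
    simp only [Function.comp, hfr, Complex.ofReal_re]
    exact hlow0 n x
  have him : ∀ x, (⟪A x, x⟫_ℂ).im = 0 := by
    intro x
    refine tendsto_nhds_unique ((Complex.continuous_im.tendsto _).comp (hA x x)) ?_
    simp only [Function.comp_def, hfr, Complex.ofReal_im]
    exact tendsto_const_nhds
  refine aux_similar T T' hTT' A (D ^ 2)⁻¹ (by positivity) ?_
    (fun x => (hlow x).trans (Complex.re_le_norm _)) ?_
  · rw [ContinuousLinearMap.isPositive_iff_complex]
    intro x
    refine ⟨Complex.ext (by simp) (by simp [him x]), ?_⟩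
    exact le_trans (by positivity) (hlow x)
  · intro x
    have hd : Tendsto (fun n => f n (T x) (T x) - f n x x) (hyperfilter ℕ) (𝓝 0) := by
      refine Tendsto.mono_left ?_ Nat.hyperfilter_le_atTop
      have hz : Tendsto (fun n : ℕ => ((n : ℝ) + 1)⁻¹ * (2 * (C ^ 2 * ‖x‖ * ‖x‖))) atTop (𝓝 0) := by
        have := (tendsto_one_div_add_atTop_nhds_zero_nat (𝕜 := ℝ)).mul_const (2 * (C ^ 2 * ‖x‖ * ‖x‖))
        simpa using this
      refine squeeze_zero_norm (fun n => ?_) hz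
      have e : f n (T x) (T x) - f n x x = (((n : ℝ) + 1)⁻¹ : ℝ) *
          (⟪(T ^ (n + 1)) x, (T ^ (n + 1)) x⟫_ℂ - ⟪(T ^ 0) x, (T ^ 0) x⟫_ℂ) := by
        rw [← Finset.sum_range_sub (fun k => ⟪(T ^ k) x, (T ^ k) x⟫_ℂ), Finset.sum_sub_distrib,
          mul_sub]
        simp only [f, pow_succ, mul_apply_eq_comp]
      rw [e, norm_mul, Complex.norm_real, norm_inv, Real.norm_of_nonneg (hn0 n).le]
      gcongr
      refine (norm_sub_le _ _).trans ?_
      linarith [hterm (n + 1) x x, hterm 0 x x]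
    exact sub_eq_zero.1 (tendsto_nhds_unique ((hA (T x) (T x)).sub (hA x x)) hd)
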